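/- arXiv:math/0611151 — 3 statements merged into one kernel-verified Lean document; each statement's English description precedes it below -/
import Mathlib

section
/- Let q > 3 be a prime with q ≡ 2 or 7 (mod 9), let p be a prime with p ≡ 1 (mod 3) and p ≠ q, and let L, M be integers with 4p = L² + 27M². Then q^{(p−1)/3} ≡ −(L + 3M)·(6M)⁻¹ (mod p) if and only if there exists an integer t such that (t³ − 3t² − 9t + 3)·L ≡ −3(t³ + 9t² − 9t − 9)·M (mod q). -/
/-!
Let `χ` be the cubic residue character modulo the prime of `ℤ[ω]` above `p` at which
`ω ↦ -(L + 3M) / (6M)`, and put `J = J(χ, χ) = a + 3M'ω`. Then `J` has norm `p` and reduces to `0`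
modulo that prime, which forces `(2a - 3M', M') = ±(L, M)`.

In characteristic `q` the quotient `ρ = G(χ⁻¹) / G(χ)` of Gauss sums satisfies `ρ³ = J̄ / J`. If
`q ≡ σ (mod 3)` with `σ = ±1`, the Frobenius gives `ρ ^ q = χ(q) ^ (-σ) * ρ ^ σ`. When
`q ≡ -2σ (mod 9)`, every ninth root of unity `ν` satisfies `ν ^ q = (ν³) ^ (-σ) * ν ^ σ`, so writing
`J̄ / J = ω z³` one finds `χ(q) = ω` iff `z ^ q = z ^ σ`. Since `√-3 ^ q = σ √-3`, this says that
`z = (t - √-3) / (t + √-3)` for some `t` in the prime field, and clearing denominators in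
`J̄ = ω J z³` yields the cubic condition on `t`.
-/

/-- The ring `ℤ[ω]` of Eisenstein integers, encoded as `ℤ[X]/(X² + X + 1)`. -/
abbrev EisensteinInt := QuadraticAlgebra ℤ (-1) (-1)

namespace EisensteinInt

open scoped QuadraticAlgebra

lemma omega_sq_add_omega_add_one : (ω ^ 2 + ω + 1 : EisensteinInt) = 0 := by
  rw [pow_two, QuadraticAlgebra.omega_mul_omega_eq_mk]
  ext <;> simp

lemma norm_nonneg (z : EisensteinInt) : 0 ≤ z.norm := by
  rw [QuadraticAlgebra.norm_def]
  nlinarith [sq_nonneg (z.re - z.im), sq_nonneg z.re, sq_nonneg z.im]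

lemma norm_eq_zero_iff {z : EisensteinInt} : z.norm = 0 ↔ z = 0 := by
  refine ⟨fun h ↦ ?_, fun h ↦ h ▸ QuadraticAlgebra.norm_zero⟩
  rw [QuadraticAlgebra.norm_def] at h
  have him : z.im = 0 := by nlinarith [sq_nonneg (2 * z.re - z.im), sq_nonneg z.im]
  have hre : z.re = 0 := by simpa [him] using h
  ext <;> simp [him, hre]

instance : NoZeroDivisors EisensteinInt where
  eq_zero_or_eq_zero_of_mul_eq_zero {x y} h := by
    rw [← norm_eq_zero_iff, map_mul, mul_eq_zero] at h
    exact h.imp norm_eq_zero_iff.mp norm_eq_zero_iff.mp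

instance : IsDomain EisensteinInt := NoZeroDivisors.to_isDomain _

variable {R : Type*} [CommRing R]

lemma exists_ringHom_omega_eq {w : R} (hw : w ^ 2 + w + 1 = 0) :
    ∃ f : EisensteinInt →+* R, f ω = w :=
  ⟨(QuadraticAlgebra.lift (R := ℤ) ⟨w, by
      simp only [neg_smul, one_smul]; linear_combination hw⟩ : EisensteinInt →ₐ[ℤ] R),
    by simp [QuadraticAlgebra.lift]⟩

lemma ringHom_apply (f : EisensteinInt →+* R) (z : EisensteinInt) :
    f z = z.re + z.im * f ω := by
  conv_lhs => rw [← z.mk_eta, QuadraticAlgebra.mk_eq_add_smul_omega]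
  simp

lemma ringHom_star (f : EisensteinInt →+* R) (z : EisensteinInt) :
    f (star z) = z.re + z.im * f ω ^ 2 := by
  have h := congrArg f omega_sq_add_omega_add_one
  simp only [map_add, map_pow, map_one, map_zero] at h
  rw [ringHom_apply]
  simp only [QuadraticAlgebra.re_star, QuadraticAlgebra.im_star]
  push_cast
  linear_combination -(z.im : R) * h

lemma isPrimitiveRoot_map_omega [IsDomain R] (h3 : (3 : R) ≠ 0) (f : EisensteinInt →+* R) :
    IsPrimitiveRoot (f ω) 3 := by
  have : NeZero ((3 : ℕ) : R) := ⟨by exact_mod_cast h3⟩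
  rw [← Polynomial.isRoot_cyclotomic_iff, Polynomial.cyclotomic_three]
  simpa using congrArg f omega_sq_add_omega_add_one

lemma isPrimitiveRoot_omega : IsPrimitiveRoot (ω : EisensteinInt) 3 :=
  isPrimitiveRoot_map_omega (by exact_mod_cast three_ne_zero (α := ℤ)) (RingHom.id _)

lemma map_eq_map_iff_of_pow_three_eq_one {R : Type*} [CommRing R] [IsDomain R] (h3 : (3 : R) ≠ 0)
    (f : EisensteinInt →+* R) {y z : EisensteinInt} (hy : y ^ 3 = 1) (hz : z ^ 3 = 1) :
    f y = f z ↔ y = z := by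
  refine ⟨fun h ↦ ?_, congrArg f⟩
  obtain ⟨i, hi, rfl⟩ := isPrimitiveRoot_omega.eq_pow_of_pow_eq_one hy
  obtain ⟨j, hj, rfl⟩ := isPrimitiveRoot_omega.eq_pow_of_pow_eq_one hz
  rw [map_pow, map_pow] at h
  rw [(isPrimitiveRoot_map_omega h3 f).pow_inj hi hj h]

end EisensteinInt

namespace CubicResidue

open EisensteinInt Finset
open scoped QuadraticAlgebra

lemma sq_add_self_add_one_eq_zero {R : Type*} [CommRing R] [IsDomain R] {w : R}
    (hw : IsPrimitiveRoot w 3) : w ^ 2 + w + 1 = 0 := by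
  have h := hw.geom_sum_eq_zero (by norm_num)
  simp only [sum_range_succ, range_zero, sum_empty, pow_zero, pow_one] at h
  linear_combination h

lemma mul_self_eq_inv_of_pow_three_eq_one {G : Type*} [Group G] {x : G} (hx : x ^ 3 = 1) :
    x * x = x⁻¹ := by
  rw [eq_inv_iff_mul_eq_one, ← hx, pow_succ, pow_two]

section IntegralCharacters

variable {F : Type*} [Field F]

lemma star_eq_inv (χ : MulChar F EisensteinInt) : star χ = χ⁻¹ := by
  rw [eq_inv_iff_mul_eq_one]
  ext x : 1
  have hunit : IsUnit (χ x).norm := (x.isUnit.map χ).map QuadraticAlgebra.norm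
  have hnorm : (χ x).norm = 1 :=
    (Int.isUnit_eq_one_or hunit).resolve_right fun h ↦ by have := norm_nonneg (χ x); lia
  rw [MulChar.mul_apply, MulChar.star_apply, mul_comm,
    ← QuadraticAlgebra.algebraMap_norm_eq_mul_star, hnorm, map_one, MulChar.one_apply_coe]

variable [Fintype F]

lemma jacobiSum_inv (χ φ : MulChar F EisensteinInt) :
    jacobiSum χ⁻¹ φ⁻¹ = star (jacobiSum χ φ) := by
  rw [← star_eq_inv, ← star_eq_inv]
  exact jacobiSum_ringHomComp χ φ (starRingEnd EisensteinInt)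

lemma norm_jacobiSum {χ φ : MulChar F EisensteinInt} (hχ : χ ≠ 1) (hφ : φ ≠ 1)
    (hχφ : χ * φ ≠ 1) : (jacobiSum χ φ).norm = Fintype.card F := by
  let ι := algebraMap EisensteinInt (FractionRing EisensteinInt)
  have hι : Function.Injective ι := IsFractionRing.injective _ _
  have hchar : ringChar (FractionRing EisensteinInt) ≠ ringChar F := by
    rw [ringChar.eq_zero]
    exact (CharP.ringChar_ne_zero_of_finite F).symm
  have hJ := jacobiSum_mul_jacobiSum_inv hchar ((MulChar.ringHomComp_ne_one_iff hι).mpr hχ)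
    ((MulChar.ringHomComp_ne_one_iff hι).mpr hφ)
    (MulChar.ringHomComp_mul χ φ ι ▸ (MulChar.ringHomComp_ne_one_iff hι).mpr hχφ)
  rw [MulChar.ringHomComp_inv, MulChar.ringHomComp_inv, jacobiSum_ringHomComp,
    jacobiSum_ringHomComp, jacobiSum_inv, ← map_mul,
    ← QuadraticAlgebra.algebraMap_norm_eq_mul_star, ← map_natCast ι] at hJ
  exact Int.cast_injective (α := EisensteinInt) (by simpa using hι hJ)

lemma three_dvd_im_jacobiSum (hF : 3 ∣ Fintype.card F - 1) {χ φ : MulChar F EisensteinInt}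
    (hχ : χ ^ 3 = 1) (hφ : φ ^ 3 = 1) : 3 ∣ (jacobiSum χ φ).im := by
  obtain ⟨z, -, hz⟩ :=
    exists_jacobiSum_eq_neg_one_add (by norm_num) hχ hφ hF isPrimitiveRoot_omega
  have hsq : ((ω - 1) ^ 2 : EisensteinInt) = -3 * ω := by
    linear_combination omega_sq_add_omega_add_one
  rw [hz, hsq]
  simp

end IntegralCharacters

section CubicResidueCharacter

variable {F : Type*} [Field F]

lemma apply_pow_three {R : Type*} [CommRing R] {χ : MulChar F R} (hχ : χ ^ 3 = 1) {x : F}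
    (hx : x ≠ 0) : χ x ^ 3 = 1 := by
  rw [← χ.pow_apply' three_ne_zero, hχ, MulChar.one_apply hx.isUnit]

lemma apply_eq_omega_iff_map_eq {χ : MulChar F EisensteinInt} (hχ : χ ^ 3 = 1) {R : Type*}
    [CommRing R] [IsDomain R] (h3 : (3 : R) ≠ 0) (f : EisensteinInt →+* R) {x : F} (hx : x ≠ 0) :
    χ x = ω ↔ f (χ x) = f ω :=
  (map_eq_map_iff_of_pow_three_eq_one h3 f (apply_pow_three hχ hx)
    isPrimitiveRoot_omega.pow_eq_one).symm

lemma ringHomComp_ne_one {χ : MulChar F EisensteinInt} (hχ : χ ^ 3 = 1) (hχ1 : χ ≠ 1) {R : Type*}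
    [CommRing R] [IsDomain R] (h3 : (3 : R) ≠ 0) (f : EisensteinInt →+* R) :
    χ.ringHomComp f ≠ 1 := by
  obtain ⟨x, hx⟩ := MulChar.ne_one_iff.mp hχ1
  refine MulChar.ne_one_iff.mpr ⟨x, fun hf ↦ hx ?_⟩
  rwa [MulChar.ringHomComp_apply, ← map_one f,
    map_eq_map_iff_of_pow_three_eq_one h3 f (apply_pow_three hχ x.ne_zero) (one_pow 3)] at hf

variable [Fintype F]

/-- `χ` is the cubic residue character of `F` modulo the prime `ker f` of `ℤ[ω]`: the cubic
character with values in `ℤ[ω]` that reduces to `x ↦ x ^ ((#F - 1) / 3)` under `f`. -/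
structure IsCubicResidueChar (f : EisensteinInt →+* F) (χ : MulChar F EisensteinInt) : Prop where
  pow_three : χ ^ 3 = 1
  map_apply : ∀ x, f (χ x) = x ^ ((Fintype.card F - 1) / 3)

lemma three_ne_zero_of_dvd_card_sub_one (hF : 3 ∣ Fintype.card F - 1) : (3 : F) ≠ 0 := by
  intro h
  have hcard : ((Fintype.card F - 1 : ℕ) : F) = 0 := by
    obtain ⟨m, hm⟩ := hF
    rw [hm, Nat.cast_mul, Nat.cast_ofNat, h, zero_mul]
  rw [Nat.cast_sub Fintype.card_pos, FiniteField.cast_card_eq_zero] at hcard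
  simp at hcard

lemma exists_isCubicResidueChar (hF : 3 ∣ Fintype.card F - 1) (f : EisensteinInt →+* F) :
    ∃ χ, IsCubicResidueChar f χ := by
  classical
  obtain ⟨m, hm⟩ := hF
  have hm0 : m ≠ 0 := by have := Fintype.one_lt_card (α := F); lia
  have hω := isPrimitiveRoot_map_omega (three_ne_zero_of_dvd_card_sub_one ⟨m, hm⟩) f
  obtain ⟨g, hg⟩ := IsCyclic.exists_generator (α := Fˣ)
  obtain ⟨k, -, hk⟩ := hω.eq_pow_of_pow_eq_one (ξ := (g : F) ^ m) <| by
    rw [← pow_mul, mul_comm, ← hm, FiniteField.pow_card_sub_one_eq_one _ g.ne_zero]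
  have hζ : (ω ^ k : EisensteinInt) ^ Fintype.card Fˣ = 1 := by
    rw [Fintype.card_units, hm, pow_mul, pow_right_comm _ k 3, isPrimitiveRoot_omega.pow_eq_one,
      one_pow, one_pow]
  let χ := MulChar.ofRootOfUnity (rootsOfUnity.mkOfPowEq _ hζ).2 hg
  have hχg : χ g = ω ^ k := MulChar.ofRootOfUnity_spec _ hg
  refine ⟨χ, (MulChar.eq_iff hg _ _).mpr ?_, fun x ↦ ?_⟩
  · rw [MulChar.pow_apply_coe, hχg, ← pow_mul, mul_comm, pow_mul, isPrimitiveRoot_omega.pow_eq_one,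
      one_pow, MulChar.one_apply_coe]
  · rw [hm, Nat.mul_div_cancel_left m (by norm_num)]
    rcases eq_or_ne x 0 with rfl | hx
    · rw [MulChar.map_zero, map_zero, zero_pow hm0]
    · obtain ⟨n, hn⟩ := mem_powers_iff_mem_zpowers.mpr (hg (Units.mk0 x hx))
      have hx' : x = (g : F) ^ n := by simpa using congrArg Units.val hn.symm
      rw [hx', map_pow, hχg, map_pow, map_pow, hk, pow_right_comm]

lemma IsCubicResidueChar.ne_one {f : EisensteinInt →+* F} {χ : MulChar F EisensteinInt}
    (hχ : IsCubicResidueChar f χ) (hF : 3 ∣ Fintype.card F - 1) : χ ≠ 1 := by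
  rintro rfl
  have hcard := Fintype.one_lt_card (α := F)
  have hdvd : Fintype.card F - 1 ∣ (Fintype.card F - 1) / 3 := by
    rw [← FiniteField.forall_pow_eq_one_iff F]
    intro x
    ext
    rw [Units.val_pow_eq_pow_val, ← hχ.map_apply, MulChar.one_apply_coe, map_one, Units.val_one]
  have := Nat.le_of_dvd (by lia) hdvd
  lia

lemma IsCubicResidueChar.apply_eq_omega_iff {f : EisensteinInt →+* F}
    {χ : MulChar F EisensteinInt} (hχ : IsCubicResidueChar f χ) (hF : 3 ∣ Fintype.card F - 1)
    {x : F} (hx : x ≠ 0) : χ x = ω ↔ x ^ ((Fintype.card F - 1) / 3) = f ω := by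
  rw [← hχ.map_apply, apply_eq_omega_iff_map_eq hχ.pow_three
    (three_ne_zero_of_dvd_card_sub_one hF) f hx]

lemma IsCubicResidueChar.map_jacobiSum_eq_zero {f : EisensteinInt →+* F}
    {χ : MulChar F EisensteinInt} (hχ : IsCubicResidueChar f χ) (hF : 3 ∣ Fintype.card F - 1) :
    f (jacobiSum χ χ) = 0 := by
  obtain ⟨m, hm⟩ := hF
  have hm0 : m ≠ 0 := by have := Fintype.one_lt_card (α := F); lia
  have hexpand (x : F) : f (χ x * χ (1 - x)) =
      ∑ j ∈ range (m + 1), (-1) ^ j * (m.choose j : F) * x ^ (m + j) := by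
    rw [map_mul, hχ.map_apply, hχ.map_apply, hm, Nat.mul_div_cancel_left m (by norm_num),
      sub_eq_neg_add, add_pow, mul_sum]
    refine sum_congr rfl fun j _ ↦ ?_
    rw [neg_pow]
    ring
  simp only [jacobiSum, map_sum, hexpand]
  rw [sum_comm]
  refine sum_eq_zero fun j hj ↦ ?_
  have hlt : m + j < Fintype.card F - 1 := by have := mem_range.mp hj; lia
  rw [← mul_sum, FiniteField.sum_pow_lt_card_sub_one F _ hlt, mul_zero]

lemma IsCubicResidueChar.norm_jacobiSum {f : EisensteinInt →+* F} {χ : MulChar F EisensteinInt}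
    (hχ : IsCubicResidueChar f χ) (hF : 3 ∣ Fintype.card F - 1) :
    (jacobiSum χ χ).norm = Fintype.card F := by
  have hχ1 := hχ.ne_one hF
  refine CubicResidue.norm_jacobiSum hχ1 hχ1 ?_
  rwa [mul_self_eq_inv_of_pow_three_eq_one hχ.pow_three, inv_ne_one]

end CubicResidueCharacter

lemma zpow_eq_zpow_of_pow_eq_one {G : Type*} [DivisionMonoid G] {x : G} {n : ℕ} (hn : n ≠ 0)
    (hx : x ^ n = 1) {a b : ℤ} (h : (n : ℤ) ∣ a - b) : x ^ a = x ^ b := by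
  obtain ⟨k, hk⟩ := h
  obtain ⟨u, rfl⟩ := IsUnit.of_pow_eq_one hx hn
  have hu : u ^ n = 1 := by exact_mod_cast hx
  rw [← Units.val_zpow_eq_zpow_val, ← Units.val_zpow_eq_zpow_val, show a = n * k + b by lia,
    zpow_add, zpow_mul, zpow_natCast, hu, one_zpow, one_mul]

section GaussSums

variable {F K : Type*} [Field F] [Field K]

lemma exists_isPrimitive_addChar [Finite F] [IsAlgClosed K] (hFK : ringChar K ≠ ringChar F) :
    ∃ ψ : AddChar F K, ψ.IsPrimitive :=
  let ψ := AddChar.FiniteField.primitiveChar F K hFK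
  let ι : CyclotomicField ψ.n K →ₐ[K] K :=
    Polynomial.SplittingField.lift (Polynomial.cyclotomic ψ.n K) (IsAlgClosed.splits _)
  ⟨_, ψ.prim.compMulHom_of_isPrimitive (f := (ι : _ →* K)) ι.injective⟩

variable [Fintype F]

lemma jacobiSum_inv_div_jacobiSum {χ : MulChar F K} (hχ : χ ^ 3 = 1) (hχ1 : χ ≠ 1)
    (hF : (Fintype.card F : K) ≠ 0) {ψ : AddChar F K} (hψ : ψ.IsPrimitive) :
    jacobiSum χ⁻¹ χ⁻¹ / jacobiSum χ χ = (gaussSum χ⁻¹ ψ / gaussSum χ ψ) ^ 3 := by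
  have hmul : χ * χ = χ⁻¹ := mul_self_eq_inv_of_pow_three_eq_one hχ
  have hmul' : χ⁻¹ * χ⁻¹ = χ := by rw [← mul_inv, hmul, inv_inv]
  have hχ1' : χ⁻¹ ≠ 1 := inv_ne_one.mpr hχ1
  have hg := gaussSum_ne_zero_of_nontrivial hF hχ1 hψ
  have hg' := gaussSum_ne_zero_of_nontrivial hF hχ1' hψ
  rw [jacobiSum_eq_gaussSum_mul_gaussSum_div_gaussSum hF (by rwa [hmul']) hψ,
    jacobiSum_eq_gaussSum_mul_gaussSum_div_gaussSum hF (by rwa [hmul]) hψ, hmul, hmul']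
  field_simp

variable {q : ℕ} [Fact q.Prime] [CharP K q]

lemma gaussSum_pow_char (χ : MulChar F K) (ψ : AddChar F K) (hq : (q : F) ≠ 0) :
    gaussSum χ ψ ^ q = (χ ^ q)⁻¹ q * gaussSum (χ ^ q) ψ := by
  rw [gaussSum_frob, AddChar.pow_mulShift]
  exact gaussSum_mulShift_eq _ ψ (Units.mk0 _ hq)

lemma gaussSum_ratio_pow_char {χ : MulChar F K} (hχ : χ ^ 3 = 1) (ψ : AddChar F K)
    (hq : (q : F) ≠ 0) {σ : ℤˣ} (hσ : (3 : ℤ) ∣ q - σ) :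
    (gaussSum χ⁻¹ ψ / gaussSum χ ψ) ^ q =
      χ q ^ (-(σ : ℤ)) * (gaussSum χ⁻¹ ψ / gaussSum χ ψ) ^ (σ : ℤ) := by
  have hpow : χ ^ q = χ ^ (σ : ℤ) := by
    rw [← zpow_natCast, zpow_eq_zpow_of_pow_eq_one three_ne_zero hχ hσ]
  have hc : χ q ^ 2 * χ q = 1 := by rw [← pow_succ, apply_pow_three hχ hq]
  have hinv : χ⁻¹ q = (χ q)⁻¹ := by rw [MulChar.inv_apply_eq_inv']
  rw [div_pow, gaussSum_pow_char _ ψ hq, gaussSum_pow_char _ ψ hq, inv_pow, hpow]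
  rcases Int.units_eq_one_or σ with rfl | rfl
  · simp only [Units.val_one, zpow_one, inv_inv, hinv, zpow_neg]
    rw [mul_div_mul_comm, div_inv_eq_mul, ← sq, ← eq_inv_of_mul_eq_one_left hc]
  · simp only [Units.val_neg, Units.val_one, zpow_neg, zpow_one, inv_inv, hinv, inv_div, neg_neg]
    rw [mul_div_mul_comm, ← eq_inv_of_mul_eq_one_left hc]
    field_simp

end GaussSums

section Frobenius

variable {K : Type*} [Field K] {q : ℕ} [Fact q.Prime] [CharP K q] {σ : ℤˣ}

lemma exists_intCast_eq_iff_pow_char_eq {x : K} : (∃ t : ℤ, (t : K) = x) ↔ x ^ q = x := by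
  rw [← mem_bot_iff_intCast q K, Subfield.mem_bot_iff_pow_eq_self K q]

lemma sub_sq_ne_zero {R : Type*} [CommRing R] [IsDomain R] {w : R} (hw : IsPrimitiveRoot w 3) :
    w - w ^ 2 ≠ 0 := by
  rw [show w - w ^ 2 = w * (1 - w) by ring]
  exact mul_ne_zero (hw.ne_zero three_ne_zero) (sub_ne_zero.mpr (hw.ne_one (by norm_num)).symm)

lemma sub_sq_pow_char {w : K} (hw : IsPrimitiveRoot w 3) (hσ : (3 : ℤ) ∣ q - σ) :
    (w - w ^ 2) ^ q = (σ : ℤ) * (w - w ^ 2) := by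
  have hwq : w ^ q = w ^ (σ : ℤ) := by
    rw [← zpow_natCast, zpow_eq_zpow_of_pow_eq_one three_ne_zero hw.pow_eq_one hσ]
  rw [sub_pow_char, pow_right_comm, hwq]
  have hw3 : w ^ 2 * w = 1 := by rw [← pow_succ, hw.pow_eq_one]
  rcases Int.units_eq_one_or σ with rfl | rfl
  · simp
  · simp only [Units.val_neg, Units.val_one, zpow_neg, zpow_one, Int.cast_neg, Int.cast_one,
      ← eq_inv_of_mul_eq_one_left hw3]
    linear_combination -w * hw3

lemma pow_char_eq_zpow_iff_exists_eq_div {θ : K} (h2 : (2 : K) ≠ 0) (hθ : θ ≠ 0)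
    (hθq : θ ^ q = (σ : ℤ) * θ) {z : K} (hz0 : z ≠ 0) (hz1 : z ≠ 1) :
    z ^ q = z ^ (σ : ℤ) ↔ ∃ t : ℤ, z = (t - θ) / (t + θ) := by
  have hz1' : 1 - z ≠ 0 := sub_ne_zero.mpr hz1.symm
  constructor
  · intro hz
    have hfix : (θ * (1 + z) / (1 - z)) ^ q = θ * (1 + z) / (1 - z) := by
      rw [div_pow, mul_pow, add_pow_char, sub_pow_char, one_pow, hz, hθq]
      rcases Int.units_eq_one_or σ with rfl | rfl
      · simp
      · have : z - 1 ≠ 0 := sub_ne_zero.mpr hz1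
        simp
        field_simp
        grind
    obtain ⟨t, ht⟩ := exists_intCast_eq_iff_pow_char_eq.mpr hfix
    refine ⟨t, ?_⟩
    rw [ht]
    field_simp
    grind
  · rintro ⟨t, rfl⟩
    rw [div_pow, add_pow_char, sub_pow_char, hθq, ← frobenius_def q (t : K), map_intCast]
    rcases Int.units_eq_one_or σ with rfl | rfl <;> simp [← sub_eq_add_neg]

end Frobenius

lemma mul_add_pow_eq_mul_sub_pow_iff {K : Type*} [Field K] {a b s θ : K} {n : ℕ} (h2 : (2 : K) ≠ 0)
    (hθ : θ ≠ 0) (ha : a ≠ 0) (hb : b ≠ 0) (hn : n ≠ 0) :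
    a * (s + θ) ^ n = b * (s - θ) ^ n ↔
      ∃ z, z ≠ 0 ∧ z ≠ 1 ∧ z = (s - θ) / (s + θ) ∧ a = b * z ^ n := by
  have h2θ : 2 * θ ≠ 0 := mul_ne_zero h2 hθ
  constructor
  · intro h
    have hadd : s + θ ≠ 0 := by
      intro h0
      rw [h0, zero_pow hn, mul_zero, eq_comm, mul_eq_zero_iff_left hb, pow_eq_zero_iff hn] at h
      exact h2θ (by linear_combination h0 - h)
    have hsub : s - θ ≠ 0 := by
      intro h0
      rw [h0, zero_pow hn, mul_zero, mul_eq_zero_iff_left ha] at h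
      exact pow_ne_zero n hadd h
    refine ⟨_, div_ne_zero hsub hadd, fun h1 ↦ h2θ ?_, rfl, ?_⟩
    · rw [div_eq_one_iff_eq hadd] at h1
      linear_combination -h1
    · rw [div_pow, mul_div_assoc', ← h, mul_div_cancel_right₀ _ (pow_ne_zero n hadd)]
  · rintro ⟨z, hz0, -, hz, rfl⟩
    have hadd : s + θ ≠ 0 := (div_ne_zero_iff.mp (hz ▸ hz0)).2
    rw [mul_assoc, ← mul_pow, hz, div_mul_cancel₀ _ hadd]

section Criterion

variable {F K : Type*} [Field F] [Field K] {q : ℕ} [Fact q.Prime] [CharP K q]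
  {χ : MulChar F K} {σ : ℤˣ}

lemma ringChar_ne_ringChar (hq : (q : F) ≠ 0) : ringChar K ≠ ringChar F := by
  rw [ringChar.eq K q]
  rintro rfl
  exact hq (ringChar.Nat.cast_ringChar)

variable [Fintype F]

lemma natCast_card_ne_zero (hq : (q : F) ≠ 0) : (Fintype.card F : K) ≠ 0 := by
  rw [Ne, CharP.cast_eq_zero_iff K q]
  exact fun h ↦ not_isUnit_prime_of_dvd_card h hq.isUnit

lemma jacobiSum_mul_jacobiSum_inv_eq_card (hχ : χ ^ 3 = 1) (hχ1 : χ ≠ 1) (hq : (q : F) ≠ 0) :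
    jacobiSum χ χ * jacobiSum χ⁻¹ χ⁻¹ = Fintype.card F :=
  jacobiSum_mul_jacobiSum_inv (ringChar_ne_ringChar hq) hχ1 hχ1
    (by rwa [mul_self_eq_inv_of_pow_three_eq_one hχ, inv_ne_one])

variable [IsAlgClosed K]

lemma apply_eq_iff_pow_char_eq_zpow (hχ : χ ^ 3 = 1) (hχ1 : χ ≠ 1) (hq : (q : F) ≠ 0)
    (hσ : (9 : ℤ) ∣ q + 2 * σ) {w z : K} (hw : w ^ 3 = 1) (hz0 : z ≠ 0)
    (hz : jacobiSum χ⁻¹ χ⁻¹ = w * jacobiSum χ χ * z ^ 3) :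
    χ q = w ↔ z ^ q = z ^ (σ : ℤ) := by
  have hF : (Fintype.card F : K) ≠ 0 := natCast_card_ne_zero hq
  obtain ⟨ψ, hψ⟩ := exists_isPrimitive_addChar (F := F) (ringChar_ne_ringChar (K := K) hq)
  have hρ3 := jacobiSum_inv_div_jacobiSum hχ hχ1 hF hψ
  have hρq := gaussSum_ratio_pow_char hχ ψ hq (σ := σ) (by lia)
  have hρ0 : gaussSum χ⁻¹ ψ / gaussSum χ ψ ≠ 0 :=
    div_ne_zero (gaussSum_ne_zero_of_nontrivial hF (inv_ne_one.mpr hχ1) hψ)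
      (gaussSum_ne_zero_of_nontrivial hF hχ1 hψ)
  set ρ := gaussSum χ⁻¹ ψ / gaussSum χ ψ
  have hJ : jacobiSum χ χ ≠ 0 := fun h ↦ hρ0 (by simpa [h] using hρ3.symm)
  have hν3 : (ρ / z) ^ 3 = w := by
    rw [div_pow, ← hρ3, hz]
    field_simp
  have hw0 : w ≠ 0 := fun h ↦ by simp [h] at hw
  have hνq : (ρ / z) ^ q = w ^ (-(σ : ℤ)) * (ρ / z) ^ (σ : ℤ) := by
    have hν9 : (ρ / z) ^ 9 = 1 := by rw [pow_mul _ 3 3, hν3, hw]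
    rw [← hν3, ← zpow_natCast, ← zpow_natCast, ← zpow_mul, ← zpow_add₀ (div_ne_zero hρ0 hz0)]
    exact zpow_eq_zpow_of_pow_eq_one (by norm_num) hν9 (by push_cast; lia)
  have hc3 : χ q ^ 3 = 1 := apply_pow_three hχ hq
  have hc0 : χ q ≠ 0 := fun h ↦ by simp [h] at hc3
  have hzq : z ^ q = (w / χ q) ^ (σ : ℤ) * z ^ (σ : ℤ) := by
    rw [div_pow, hρq] at hνq
    have hρσ := zpow_ne_zero (σ : ℤ) hρ0
    simp only [div_zpow, zpow_neg] at hνq ⊢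
    field_simp at hνq ⊢
    exact hνq.symm
  rw [hzq, mul_eq_right₀ (zpow_ne_zero _ hz0)]
  rcases Int.units_eq_one_or σ with rfl | rfl
  · simp [div_eq_one_iff_eq hc0, eq_comm]
  · simp [div_eq_one_iff_eq hw0]

lemma exists_pow_eq_and_ne_one {w : K} {n : ℕ} (hw : IsPrimitiveRoot w n) (hn : 1 < n) (a : K) :
    ∃ z : K, z ^ n = a ∧ z ≠ 1 := by
  obtain ⟨z, hz⟩ := IsAlgClosed.exists_pow_nat_eq a (by lia : 0 < n)
  rcases eq_or_ne z 1 with rfl | hz1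
  · exact ⟨w, by rw [hw.pow_eq_one, ← hz, one_pow], hw.ne_one hn⟩
  · exact ⟨z, hz, hz1⟩

lemma apply_eq_iff_exists_jacobiSum_mul_eq (hχ : χ ^ 3 = 1) (hχ1 : χ ≠ 1) (hq : (q : F) ≠ 0)
    (hσ : (9 : ℤ) ∣ q + 2 * σ) (h2 : (2 : K) ≠ 0) {w : K} (hw : IsPrimitiveRoot w 3) :
    χ q = w ↔ ∃ t : ℤ, jacobiSum χ⁻¹ χ⁻¹ * (t + (w - w ^ 2)) ^ 3 =
      w * jacobiSum χ χ * (t - (w - w ^ 2)) ^ 3 := by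
  have hJJ : jacobiSum χ χ * jacobiSum χ⁻¹ χ⁻¹ ≠ 0 := by
    rw [jacobiSum_mul_jacobiSum_inv_eq_card hχ hχ1 hq]
    exact natCast_card_ne_zero hq
  have hJ' : jacobiSum χ⁻¹ χ⁻¹ ≠ 0 := right_ne_zero_of_mul hJJ
  have hwJ : w * jacobiSum χ χ ≠ 0 :=
    mul_ne_zero (hw.ne_zero three_ne_zero) (left_ne_zero_of_mul hJJ)
  have hθ : w - w ^ 2 ≠ 0 := sub_sq_ne_zero hw
  have hθq : (w - w ^ 2) ^ q = (σ : ℤ) * (w - w ^ 2) := sub_sq_pow_char hw (by lia)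
  have hiff {z : K} (hz0 : z ≠ 0) (hz1 : z ≠ 1)
      (hz : jacobiSum χ⁻¹ χ⁻¹ = w * jacobiSum χ χ * z ^ 3) :
      χ q = w ↔ ∃ t : ℤ, z = (t - (w - w ^ 2)) / (t + (w - w ^ 2)) := by
    rw [apply_eq_iff_pow_char_eq_zpow hχ hχ1 hq hσ hw.pow_eq_one hz0 hz,
      pow_char_eq_zpow_iff_exists_eq_div h2 hθ hθq hz0 hz1]
  simp only [mul_add_pow_eq_mul_sub_pow_iff h2 hθ hJ' hwJ three_ne_zero]
  constructor
  · intro h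
    obtain ⟨z, hz3, hz1⟩ := exists_pow_eq_and_ne_one hw (by norm_num)
      (jacobiSum χ⁻¹ χ⁻¹ / (w * jacobiSum χ χ))
    have hz : jacobiSum χ⁻¹ χ⁻¹ = w * jacobiSum χ χ * z ^ 3 := by
      rw [hz3, mul_div_cancel₀ _ hwJ]
    have hz0 : z ≠ 0 := by
      rintro rfl
      exact hJ' (by simpa using hz)
    obtain ⟨t, ht⟩ := (hiff hz0 hz1 hz).mp h
    exact ⟨t, z, hz0, hz1, ht, hz⟩
  · rintro ⟨t, z, hz0, hz1, ht, hz⟩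
    exact (hiff hz0 hz1 hz).mpr ⟨t, ht⟩

end Criterion

section CubicForm

/-- The cubic in `t`, linear in `(L, M)`, whose vanishing is the congruence on slopes. For
`J = a + 3Mω` and `L = 2a - 3M` it is `J̄ * (t + √-3)³ - ω * J * (t - √-3)³` up to a nonzero
factor. -/
def omegaForm {R : Type*} [CommRing R] (L M t : R) : R :=
  (t ^ 3 - 3 * t ^ 2 - 9 * t + 3) * L + 3 * (t ^ 3 + 9 * t ^ 2 - 9 * t - 9) * M

lemma omegaForm_neg_neg {R : Type*} [CommRing R] (L M t : R) :
    omegaForm (-L) (-M) t = -omegaForm L M t := by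
  unfold omegaForm
  ring

lemma map_omegaForm {R S : Type*} [CommRing R] [CommRing S] (f : R →+* S) (L M t : R) :
    f (omegaForm L M t) = omegaForm (f L) (f M) (f t) := by
  simp only [omegaForm, map_add, map_mul, map_sub, map_pow, map_ofNat]

lemma sub_sq_mul_omegaForm {R : Type*} [CommRing R] {w : R} (hw : w ^ 2 + w + 1 = 0) (a M t : R) :
    (w - w ^ 2) * omegaForm (2 * a - 3 * M) M t =
      2 * w * ((a + 3 * M * w ^ 2) * (t + (w - w ^ 2)) ^ 3 -
        w * (a + 3 * M * w) * (t - (w - w ^ 2)) ^ 3) := by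
  unfold omegaForm
  grind

variable {K : Type*} [Field K]

lemma map_star_mul_eq_iff_omegaForm_eq_zero (h2 : (2 : K) ≠ 0) (h3 : (3 : K) ≠ 0)
    (f : EisensteinInt →+* K) {J : EisensteinInt} {M : ℤ} (hM : J.im = 3 * M) (t : K) :
    f (star J) * (t + (f ω - f ω ^ 2)) ^ 3 = f ω * f J * (t - (f ω - f ω ^ 2)) ^ 3 ↔
      omegaForm (2 * J.re - 3 * M : K) M t = 0 := by
  have hw := isPrimitiveRoot_map_omega h3 f
  have hid := sub_sq_mul_omegaForm (sq_add_self_add_one_eq_zero hw) (J.re : K) M t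
  have hJ : f J = J.re + 3 * M * f ω := by rw [ringHom_apply, hM]; push_cast; ring
  have hJstar : f (star J) = J.re + 3 * M * f ω ^ 2 := by rw [ringHom_star, hM]; push_cast; ring
  rw [← mul_eq_zero_iff_left (sub_sq_ne_zero hw), hid, ← hJ, ← hJstar,
    mul_eq_zero_iff_left (mul_ne_zero h2 (hw.ne_zero three_ne_zero)), sub_eq_zero]

lemma apply_eq_omega_iff_exists_dvd_omegaForm {F : Type*} [Field F] [Fintype F] {q : ℕ}
    [Fact q.Prime] (hq3 : 3 < q) (hq : (q : F) ≠ 0) {σ : ℤˣ} (hσ : (9 : ℤ) ∣ q + 2 * σ)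
    {χ : MulChar F EisensteinInt} (hχ : χ ^ 3 = 1) (hχ1 : χ ≠ 1) {M : ℤ}
    (hM : (jacobiSum χ χ).im = 3 * M) :
    χ q = ω ↔ ∃ t : ℤ, (q : ℤ) ∣ omegaForm (2 * (jacobiSum χ χ).re - 3 * M) M t := by
  let K := AlgebraicClosure (ZMod q)
  have hsmall {n : ℕ} (hn0 : 0 < n) (hn : n < q) : (n : K) ≠ 0 := by
    rw [Ne, CharP.cast_eq_zero_iff K q]
    exact Nat.not_dvd_of_pos_of_lt hn0 hn
  have hdvd (a : ℤ) : (q : ℤ) ∣ a ↔ Int.castRingHom K a = 0 :=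
    (CharP.intCast_eq_zero_iff K q a).symm
  have h2 : (2 : K) ≠ 0 := mod_cast hsmall two_pos (by lia)
  have h3 : (3 : K) ≠ 0 := mod_cast hsmall three_pos hq3
  have : NeZero ((3 : ℕ) : K) := ⟨mod_cast h3⟩
  obtain ⟨w, hw⟩ := HasEnoughRootsOfUnity.exists_primitiveRoot K 3
  obtain ⟨f, rfl⟩ := exists_ringHom_omega_eq (sq_add_self_add_one_eq_zero hw)
  have hχf : χ.ringHomComp f ^ 3 = 1 := by
    rw [MulChar.ringHomComp_pow, hχ, MulChar.ringHomComp_one]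
  rw [apply_eq_omega_iff_map_eq hχ h3 f hq, ← MulChar.ringHomComp_apply,
    apply_eq_iff_exists_jacobiSum_mul_eq hχf (ringHomComp_ne_one hχ hχ1 h3 f) hq hσ h2 hw]
  refine exists_congr fun t ↦ ?_
  rw [MulChar.ringHomComp_inv, jacobiSum_ringHomComp, jacobiSum_ringHomComp, jacobiSum_inv,
    map_star_mul_eq_iff_omegaForm_eq_zero h2 h3 f hM, hdvd, map_omegaForm]
  simp

lemma exists_units_nine_dvd {q : ℕ} (hq : q % 9 = 2 ∨ q % 9 = 7) :
    ∃ σ : ℤˣ, (9 : ℤ) ∣ q + 2 * σ := by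
  rcases hq with hq | hq
  exacts [⟨-1, by push_cast; lia⟩, ⟨1, by push_cast; lia⟩]

lemma modEq_iff_dvd_omegaForm {n L M t : ℤ} :
    (t ^ 3 - 3 * t ^ 2 - 9 * t + 3) * L ≡ -3 * (t ^ 3 + 9 * t ^ 2 - 9 * t - 9) * M [ZMOD n] ↔
      n ∣ omegaForm L M t := by
  rw [Int.modEq_comm, Int.modEq_iff_dvd, omegaForm, neg_mul, neg_mul, sub_neg_eq_add]

end CubicForm

section Representations

lemma eq_or_eq_neg_of_dvd {n : ℕ} (hn : n ≠ 0) {L M L' M' : ℤ}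
    (h : (4 * n : ℤ) = L ^ 2 + 27 * M ^ 2)
    (h' : (4 * n : ℤ) = L' ^ 2 + 27 * M' ^ 2) (hdvd : (n : ℤ) ∣ L * M' - M * L') :
    L' = L ∧ M' = M ∨ L' = -L ∧ M' = -M := by
  obtain ⟨d, hd⟩ := hdvd
  have hbrahmagupta : 16 * (n : ℤ) ^ 2 = (L * L' + 27 * M * M') ^ 2 + 27 * (n * d) ^ 2 := by
    rw [← hd]
    linear_combination 4 * n * h + (L ^ 2 + 27 * M ^ 2) * h'
  have hd0 : d = 0 := by
    by_contra hne
    have hn2 : 0 < (n : ℤ) ^ 2 := by positivity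
    have hd2 : 0 < d ^ 2 := by positivity
    nlinarith [sq_nonneg (L * L' + 27 * M * M')]
  have hprop : L * M' = M * L' := by
    rw [hd0, mul_zero] at hd
    exact sub_eq_zero.mp hd
  have hM : M' ^ 2 = M ^ 2 := by
    apply mul_left_cancel₀ (show (4 * n : ℤ) ≠ 0 by positivity)
    linear_combination M' ^ 2 * h - M ^ 2 * h' + (L * M' + M * L') * hprop
  have hL : L' ^ 2 = L ^ 2 := by linear_combination h - h' - 27 * hM
  rcases sq_eq_sq_iff_eq_or_eq_neg.mp hL with hL | hL <;>
    rcases sq_eq_sq_iff_eq_or_eq_neg.mp hM with hM | hM <;> rw [hL, hM] at hprop ⊢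
  · exact .inl ⟨rfl, rfl⟩
  · rcases mul_eq_zero.mp (show L * M = 0 by linarith) with rfl | rfl <;> simp
  · rcases mul_eq_zero.mp (show L * M = 0 by linarith) with rfl | rfl <;> simp
  · exact .inr ⟨rfl, rfl⟩

lemma intCast_six_mul_ne_zero {p : ℕ} (hp : p.Prime) (hp3 : 3 < p) {L M : ℤ}
    (h : (4 * p : ℤ) = L ^ 2 + 27 * M ^ 2) : ((6 * M : ℤ) : ZMod p) ≠ 0 := by
  have hpZ : Prime (p : ℤ) := Nat.prime_iff_prime_int.mp hp
  have hsmall : ¬ (p : ℤ) ∣ 2 := fun hdvd ↦ by have := Int.le_of_dvd two_pos hdvd; lia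
  have hsmall' : ¬ (p : ℤ) ∣ 3 := fun hdvd ↦ by have := Int.le_of_dvd three_pos hdvd; lia
  rw [Ne, ZMod.intCast_zmod_eq_zero_iff_dvd, show 6 * M = 2 * (3 * M) by ring, hpZ.dvd_mul,
    hpZ.dvd_mul]
  rintro (hdvd | hdvd | ⟨x, rfl⟩)
  · exact hsmall hdvd
  · exact hsmall' hdvd
  · obtain ⟨y, rfl⟩ : (p : ℤ) ∣ L :=
      hpZ.dvd_of_dvd_pow (n := 2) ⟨4 - 27 * p * x ^ 2, by linear_combination -h⟩
    have h4 : (2 ^ 2 : ℤ) = p * (y ^ 2 + 27 * x ^ 2) :=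
      mul_left_cancel₀ hpZ.ne_zero (by linear_combination h)
    exact hsmall (hpZ.dvd_of_dvd_pow ⟨_, h4⟩)

lemma sq_add_self_add_one_eq_zero_of_sq_add_sq {F : Type*} [Field F] {L M r : F} (hM : 6 * M ≠ 0)
    (h : L ^ 2 + 27 * M ^ 2 = 0) (hr : r * (6 * M) = -(L + 3 * M)) : r ^ 2 + r + 1 = 0 := by
  apply mul_left_cancel₀ (pow_ne_zero 2 hM)
  linear_combination h + (r * (6 * M) - (L + 3 * M) + 6 * M) * hr

variable {p : ℕ} [Fact p.Prime] {L M : ℤ}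

lemma exists_ringHom_omega_eq_mul_inv (hp3 : 3 < p) (h : (4 * p : ℤ) = L ^ 2 + 27 * M ^ 2) :
    ∃ f : EisensteinInt →+* ZMod p,
      f ω = ((-(L + 3 * M) : ℤ) : ZMod p) * ((6 * M : ℤ) : ZMod p)⁻¹ := by
  have h6M := intCast_six_mul_ne_zero Fact.out hp3 h
  refine exists_ringHom_omega_eq (sq_add_self_add_one_eq_zero_of_sq_add_sq (L := (L : ZMod p))
    (M := M) (mod_cast h6M) ?_ (mod_cast inv_mul_cancel_right₀ h6M _))
  simpa using (congrArg (Int.cast : ℤ → ZMod p) h).symm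

lemma eq_or_eq_neg_of_map_eq_zero (hp3 : 3 < p) (h : (4 * p : ℤ) = L ^ 2 + 27 * M ^ 2)
    {f : EisensteinInt →+* ZMod p}
    (hf : f ω = ((-(L + 3 * M) : ℤ) : ZMod p) * ((6 * M : ℤ) : ZMod p)⁻¹)
    {z : EisensteinInt} (hz : f z = 0) (hnorm : z.norm = p) {M' : ℤ} (hM' : z.im = 3 * M') :
    2 * z.re - 3 * M' = L ∧ M' = M ∨ 2 * z.re - 3 * M' = -L ∧ M' = -M := by
  have h6M := intCast_six_mul_ne_zero Fact.out hp3 h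
  have hslope : f ω * (6 * M) = -(L + 3 * M) := by
    rw [hf]
    exact mod_cast inv_mul_cancel_right₀ h6M _
  rw [QuadraticAlgebra.norm_def, hM'] at hnorm
  rw [ringHom_apply, hM'] at hz
  refine eq_or_eq_neg_of_dvd (NeZero.ne p) h (by linear_combination -4 * hnorm) ?_
  rw [← ZMod.intCast_zmod_eq_zero_iff_dvd]
  push_cast at h6M hz ⊢
  have h3 : (3 : ZMod p) ≠ 0 := fun h0 ↦ h6M (by linear_combination 2 * (M : ZMod p) * h0)
  apply mul_left_cancel₀ h3
  linear_combination -6 * M * hz + 3 * M' * hslope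

end Representations

end CubicResidue

open CubicResidue

/-- For a prime `q > 3` with `q ≡ ±2 (mod 9)` and a prime `p ≡ 1 (mod 3)`, `p ≠ q`,
with `4p = L² + 27M²`: `F_q(L,M) = ω` iff
`(t³−3t²−9t+3)L ≡ −3(t³+9t²−9t−9)M (mod q)` for some integer `t`. -/
theorem omega_slopes_two_mod_nine (q p : ℕ) (hq : q.Prime) (hq3 : 3 < q)
    (hq9 : q % 9 = 2 ∨ q % 9 = 7)
    (hp : p.Prime) (hp3 : p % 3 = 1) (hpq : p ≠ q)
    (L M : ℤ) (h : (4 * p : ℤ) = L ^ 2 + 27 * M ^ 2) :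
    ((q : ZMod p) ^ ((p - 1) / 3) =
        ((-(L + 3 * M) : ℤ) : ZMod p) * (((6 * M : ℤ) : ZMod p))⁻¹) ↔
      ∃ t : ℤ, (t ^ 3 - 3 * t ^ 2 - 9 * t + 3) * L ≡
        -3 * (t ^ 3 + 9 * t ^ 2 - 9 * t - 9) * M [ZMOD (q : ℤ)] := by
  have := Fact.mk hp
  have := Fact.mk hq
  have hp3' : 3 < p := by have := hp.two_le; lia
  have hF : 3 ∣ Fintype.card (ZMod p) - 1 := by rw [ZMod.card]; lia
  have hqp : (q : ZMod p) ≠ 0 := by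
    rwa [Ne, ZMod.natCast_eq_zero_iff, Nat.prime_dvd_prime_iff_eq hp hq]
  obtain ⟨f, hf⟩ := exists_ringHom_omega_eq_mul_inv hp3' h
  obtain ⟨χ, hχ⟩ := exists_isCubicResidueChar hF f
  obtain ⟨M', hM'⟩ := three_dvd_im_jacobiSum hF hχ.pow_three hχ.pow_three
  obtain ⟨σ, hσ⟩ := exists_units_nine_dvd hq9
  have hpow := hχ.apply_eq_omega_iff hF hqp
  have hnorm := hχ.norm_jacobiSum hF
  rw [ZMod.card] at hpow hnorm
  rw [← hf, ← hpow,
    apply_eq_omega_iff_exists_dvd_omegaForm hq3 hqp hσ hχ.pow_three (hχ.ne_one hF) hM']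
  refine exists_congr fun t ↦ ?_
  rw [modEq_iff_dvd_omegaForm]
  rcases eq_or_eq_neg_of_map_eq_zero hp3' h hf (hχ.map_jacobiSum_eq_zero hF) hnorm hM'
    with ⟨hL, hM⟩ | ⟨hL, hM⟩
  · rw [hL, hM]
  · rw [hL, hM, omegaForm_neg_neg, dvd_neg]
end

section
/- Let F be a field, let C, D, t ∈ F with t ≠ −1, and set s = (t − 3)·(t + 1)⁻¹. Then (D·t³ − C·t² − 9D·t + C)·(C·s³ + 27D·s² − 9C·s − 27D) = (D·s³ − C·s² − 9D·s + C)·(C·t³ + 27D·t² − 9C·t − 27D). -/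
/-!
Write `σ t = (t - 3) / (t + 1)`, so that `σ (σ t) = (t + 3) / (1 - t)`. The orbit sum
`t + σ t + σ (σ t)` equals `(t ^ 3 - 9 * t) / (t ^ 2 - 1)`, and with `x` denoting this sum,
`g_γ = -(D * x - C) / (C * x + 27 * D)`. Thus `g_γ` factors through a `σ`-invariant function.
Two points `s` and `t` have the same orbit sum exactly when they lie in one orbit, which gives the
three factors of the cross difference of the two fractions.
-/

theorem orbit_sum_cross_sub_eq_mul {R : Type*} [CommRing R] (s t : R) :
    (t ^ 3 - 9 * t) * (s ^ 2 - 1) - (s ^ 3 - 9 * s) * (t ^ 2 - 1) =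
      (s - t) * (s * (t + 1) - (t - 3)) * (s * (1 - t) - (t + 3)) := by
  ring

theorem orbit_sum_cross_eq {R : Type*} [CommRing R] {s t : R} (hs : s * (t + 1) = t - 3) :
    (t ^ 3 - 9 * t) * (s ^ 2 - 1) = (s ^ 3 - 9 * s) * (t ^ 2 - 1) := by
  rw [← sub_eq_zero, orbit_sum_cross_sub_eq_mul, sub_eq_zero.mpr hs, mul_zero, zero_mul]

theorem linear_fractional_cross_eq {R : Type*} [CommSemiring R] (a b c d : R) {p q p' q' : R}
    (h : p * q' = p' * q) :
    (a * p + b * q) * (c * p' + d * q') = (a * p' + b * q') * (c * p + d * q) := by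
  calc
    (a * p + b * q) * (c * p' + d * q') =
        a * c * (p * p') + a * d * (p * q') + b * c * (p' * q) + b * d * (q * q') := by ring
    _ = a * c * (p * p') + a * d * (p' * q) + b * c * (p * q') + b * d * (q * q') := by rw [h]
    _ = (a * p' + b * q') * (c * p + d * q) := by ring

theorem g_gamma_invariance_general {R : Type*} [CommRing R] (C D : R) {s t : R}
    (hs : s * (t + 1) = t - 3) :
    (D * t ^ 3 - C * t ^ 2 - 9 * D * t + C) *
        (C * s ^ 3 + 27 * D * s ^ 2 - 9 * C * s - 27 * D) =
      (D * s ^ 3 - C * s ^ 2 - 9 * D * s + C) *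
        (C * t ^ 3 + 27 * D * t ^ 2 - 9 * C * t - 27 * D) := by
  have numerator (x : R) : D * x ^ 3 - C * x ^ 2 - 9 * D * x + C =
      D * (x ^ 3 - 9 * x) + -C * (x ^ 2 - 1) := by ring
  have denominator (x : R) : C * x ^ 3 + 27 * D * x ^ 2 - 9 * C * x - 27 * D =
      C * (x ^ 3 - 9 * x) + 27 * D * (x ^ 2 - 1) := by ring
  simp only [numerator, denominator]
  exact linear_fractional_cross_eq D (-C) C (27 * D) (orbit_sum_cross_eq hs)

/-- Cross-multiplied invariance of `g_γ` under the order-three map `t ↦ (t−3)/(t+1)`. -/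
theorem g_gamma_invariance (F : Type*) [Field F] (C D t : F) (ht : t ≠ -1)
    (s : F) (hs : s = (t - 3) * (t + 1)⁻¹) :
    (D * t ^ 3 - C * t ^ 2 - 9 * D * t + C) *
        (C * s ^ 3 + 27 * D * s ^ 2 - 9 * C * s - 27 * D) =
      (D * s ^ 3 - C * s ^ 2 - 9 * D * s + C) *
        (C * t ^ 3 + 27 * D * t ^ 2 - 9 * C * t - 27 * D) := by
  have ht' : t + 1 ≠ 0 := mt eq_neg_of_add_eq_zero_left ht
  exact g_gamma_invariance_general C D (by rw [hs, inv_mul_cancel_right₀ ht'])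
end

section
/- Let q be a prime with q ≥ 5 and q ≡ 2 (mod 3). Then the set {m ∈ ℤ/qℤ : there exists t ∈ ℤ/qℤ with t³ − 9t ≠ 0 and t² − 1 = m·(t³ − 9t)} has exactly (q − 2)/3 elements. -/
/-!
Off its zeros `1, -1` and its poles `0, 3, -3`, the function `g(t) = (t² - 1) / (t³ - 9t)` is
invariant under the Möbius transformation `t ↦ (t + 3) / (1 - t)` of order three, whose inverse is
`t ↦ (t - 3) / (1 + t)`. Since `g` has degree three, its fibres over nonzero values are the orbits
of this transformation. A fixed point is a square root of `-3`, and there is none in a field of odd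
order `q ≡ 2 (mod 3)`, where cubing is injective. Hence each nonzero value is taken three times.
With the convention `x / 0 = 0` the value `0` is taken five times, so that the number `N` of values
satisfies `q = 5 + 3 (N - 1)`.
-/

theorem card_add_eq_ncard_fiber_add_mul {α β : Type*} [Finite α] {f : α → β} {b : β} {k : ℕ}
    (hb : b ∈ Set.range f) (hk : ∀ c ∈ Set.range f, c ≠ b → (f ⁻¹' {c}).ncard = k) :
    Nat.card α + k = (f ⁻¹' {b}).ncard + k * (Set.range f).ncard := by
  classical
  let s : Finset β := (Set.finite_range f).toFinset
  have hbs : b ∈ s := by simpa [s] using hb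
  have hα : Nat.card α = ∑ c ∈ s, (f ⁻¹' {c}).ncard := by
    have := s.card_preimage_eq_sum_card_image_eq fun c _ ↦ Set.toFinite {a | f a = c}
    rwa [Set.Finite.coe_toFinset, Set.preimage_range, Nat.card_univ] at this
  have hs : ∑ c ∈ s.erase b, (f ⁻¹' {c}).ncard = (s.erase b).card * k :=
    Finset.sum_const_nat fun c hc ↦
      hk c (by simpa [s] using Finset.mem_of_mem_erase hc) (Finset.ne_of_mem_erase hc)
  rw [hα, ← Finset.add_sum_erase s _ hbs, hs, Set.ncard_eq_toFinset_card _ (Set.finite_range f),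
    ← Finset.card_erase_add_one hbs]
  ring

theorem pow_injective_of_coprime_card_sub_one {G : Type*} [GroupWithZero G] [Finite G] {n : ℕ}
    (hn : n ≠ 0) (h : (Nat.card G - 1).Coprime n) : Function.Injective fun x : G ↦ x ^ n := by
  intro x y hxy
  rcases eq_or_ne y 0 with rfl | hy
  · simpa [hn] using hxy
  have hx : x ≠ 0 := by
    rintro rfl
    simp [hn, hy, eq_comm] at hxy
  lift x to Gˣ using hx.isUnit
  lift y to Gˣ using hy.isUnit
  rw [← Nat.card_units] at h
  exact congrArg _ <| h.pow_left_bijective.injective <| Units.ext <| by simpa using hxy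

section Field

variable {F : Type*} [Field F]

theorem three_ne_zero_of_card_mod_three (h2 : (2 : F) ≠ 0) (hF : Nat.card F % 3 = 2) :
    (3 : F) ≠ 0 := by
  intro h3
  have : Finite F := Nat.finite_of_card_ne_zero (by lia)
  have := Fintype.ofFinite F
  have hcard : ((Nat.card F : ℕ) : F) = 0 := by simp
  rw [← Nat.div_add_mod (Nat.card F) 3, hF] at hcard
  push_cast at hcard
  exact h2 (by linear_combination hcard - (Nat.card F / 3 : ℕ) * h3)

theorem not_isSquare_neg_three_of_card_mod_three (h2 : (2 : F) ≠ 0) (hF : Nat.card F % 3 = 2) :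
    ¬IsSquare (-3 : F) := by
  rintro ⟨t, ht⟩
  have : Finite F := Nat.finite_of_card_ne_zero (by lia)
  have hcoprime : (Nat.card F - 1).Coprime 3 :=
    ((Nat.Prime.coprime_iff_not_dvd Nat.prime_three).2 (by lia)).symm
  -- `(√-3 - 1) / 2` is a cube root of unity
  have hcube : (t - 1) ^ 3 = 2 ^ 3 := by linear_combination (3 - t) * ht
  have ht3 : t - 1 = 2 := pow_injective_of_coprime_card_sub_one three_ne_zero hcoprime hcube
  have h12 : (2 : F) * 2 * 3 = 0 := by linear_combination -ht - (t + 3) * ht3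
  simp [h2, three_ne_zero_of_card_mod_three h2 hF] at h12

theorem two_ne_zero_of_not_isSquare_neg_three (h : ¬IsSquare (-3 : F)) : (2 : F) ≠ 0 :=
  fun h2 ↦ h ⟨1, by linear_combination -2 * h2⟩

theorem three_ne_zero_of_not_isSquare_neg_three (h : ¬IsSquare (-3 : F)) : (3 : F) ≠ 0 :=
  fun h3 ↦ h ⟨0, by linear_combination -h3⟩

/-- Lehmer's rational function. With the convention `x / 0 = 0` its poles are sent to `0`, which is
also its value at `1` and `-1`; so its range is the set of its finite values. -/
def lehmerSlope (t : F) : F :=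
  (t ^ 2 - 1) / (t ^ 3 - 9 * t)

theorem setOf_eq_range_lehmerSlope (h2 : (2 : F) ≠ 0) :
    {m : F | ∃ t : F, t ^ 3 - 9 * t ≠ 0 ∧ t ^ 2 - 1 = m * (t ^ 3 - 9 * t)} =
      Set.range lehmerSlope := by
  ext m
  constructor
  · rintro ⟨t, ht, hm⟩
    exact ⟨t, (div_eq_iff ht).2 hm⟩
  · rintro ⟨t, rfl⟩
    rcases eq_or_ne (t ^ 3 - 9 * t) 0 with ht | ht
    · refine ⟨1, fun h ↦ pow_ne_zero 3 h2 (by linear_combination -h), ?_⟩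
      simp [lehmerSlope, ht]
    · exact ⟨t, ht, (div_mul_cancel₀ _ ht).symm⟩

theorem lehmerSlope_eq_zero_iff {t : F} :
    lehmerSlope t = 0 ↔ t = 0 ∨ t = 1 ∨ t = -1 ∨ t = 3 ∨ t = -3 := by
  have hnum : t ^ 2 - 1 = (t - 1) * (t + 1) := by ring
  have hden : t ^ 3 - 9 * t = t * ((t - 3) * (t + 3)) := by ring
  simp only [lehmerSlope, hnum, hden, div_eq_zero_iff, mul_eq_zero, sub_eq_zero,
    add_eq_zero_iff_eq_neg]
  tauto

theorem one_sub_ne_zero_of_lehmerSlope_ne_zero {t : F} (ht : lehmerSlope t ≠ 0) : 1 - t ≠ 0 :=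
  fun h ↦ ht (lehmerSlope_eq_zero_iff.2 (.inr (.inl (sub_eq_zero.1 h).symm)))

theorem one_add_ne_zero_of_lehmerSlope_ne_zero {t : F} (ht : lehmerSlope t ≠ 0) : 1 + t ≠ 0 :=
  fun h ↦ ht (lehmerSlope_eq_zero_iff.2 (.inr (.inr (.inl (eq_neg_of_add_eq_zero_right h)))))

theorem ncard_lehmerSlope_fiber_zero (h2 : (2 : F) ≠ 0) (h3 : (3 : F) ≠ 0) :
    (lehmerSlope ⁻¹' {(0 : F)}).ncard = 5 := by
  classical
  have h : lehmerSlope ⁻¹' {(0 : F)} = ({0, 1, -1, 3, -3} : Finset F) := by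
    ext t
    simp [lehmerSlope_eq_zero_iff]
  have h4 : (4 : F) ≠ 0 := by
    intro h4
    exact pow_ne_zero 2 h2 (by linear_combination h4)
  rw [h, Set.ncard_coe_finset]
  grind

theorem lehmerSlope_eq_lehmerSlope_iff_mul_eq_mul (h2 : (2 : F) ≠ 0) {s t : F}
    (ht : lehmerSlope t ≠ 0) :
    lehmerSlope s = lehmerSlope t ↔
      (s ^ 2 - 1) * (t ^ 3 - 9 * t) = (t ^ 2 - 1) * (s ^ 3 - 9 * s) := by
  have htden : t ^ 3 - 9 * t ≠ 0 := (div_ne_zero_iff.1 ht).2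
  constructor
  · intro h
    have hsden : s ^ 3 - 9 * s ≠ 0 := (div_ne_zero_iff.1 (h ▸ ht : lehmerSlope s ≠ 0)).2
    exact (div_eq_div_iff hsden htden).1 h
  · intro h
    have hsden : s ^ 3 - 9 * s ≠ 0 := by
      intro hs
      have hsnum : s ^ 2 - 1 = 0 := by simpa [hs, htden] using h
      -- the resultant of numerator and denominator is a power of `2`, up to sign
      exact pow_ne_zero 3 h2 (by linear_combination (s ^ 2 - 8) * hsnum - s * hs)
    exact (div_eq_div_iff hsden htden).2 h

theorem lehmerSlope_eq_lehmerSlope_iff (h2 : (2 : F) ≠ 0) {s t : F} (ht : lehmerSlope t ≠ 0) :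
    lehmerSlope s = lehmerSlope t ↔
      s = t ∨ s = (t + 3) / (1 - t) ∨ s = (t - 3) / (1 + t) := by
  have hsub := one_sub_ne_zero_of_lehmerSlope_ne_zero ht
  have hadd := one_add_ne_zero_of_lehmerSlope_ne_zero ht
  have hfactor : (s ^ 2 - 1) * (t ^ 3 - 9 * t) - (t ^ 2 - 1) * (s ^ 3 - 9 * s) =
      (s - t) * ((s * (1 - t) - (t + 3)) * (s * (1 + t) - (t - 3))) := by ring
  rw [lehmerSlope_eq_lehmerSlope_iff_mul_eq_mul h2 ht, ← sub_eq_zero, hfactor]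
  simp only [mul_eq_zero, sub_eq_zero, eq_div_iff hsub, eq_div_iff hadd]

theorem ncard_lehmerSlope_fiber (h : ¬IsSquare (-3 : F)) {t : F} (ht : lehmerSlope t ≠ 0) :
    (lehmerSlope ⁻¹' {lehmerSlope t}).ncard = 3 := by
  have h2 := two_ne_zero_of_not_isSquare_neg_three h
  have hsub := one_sub_ne_zero_of_lehmerSlope_ne_zero ht
  have hadd := one_add_ne_zero_of_lehmerSlope_ne_zero ht
  have hsq : t ^ 2 + 3 ≠ 0 := fun ht ↦ h ⟨t, by linear_combination -ht⟩
  rw [Set.ncard_eq_three]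
  refine ⟨t, (t + 3) / (1 - t), (t - 3) / (1 + t), ?_, ?_, ?_, ?_⟩
  · rw [ne_eq, eq_div_iff hsub]
    exact fun h ↦ hsq (by linear_combination -h)
  · rw [ne_eq, eq_div_iff hadd]
    exact fun h ↦ hsq (by linear_combination h)
  · rw [ne_eq, div_eq_div_iff hsub hadd]
    exact fun h ↦ mul_ne_zero h2 hsq (by linear_combination h)
  · ext s
    exact lehmerSlope_eq_lehmerSlope_iff h2 ht

theorem ncard_range_lehmerSlope [Finite F] (h : ¬IsSquare (-3 : F)) :
    (Set.range (lehmerSlope : F → F)).ncard = (Nat.card F - 2) / 3 := by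
  have hzero : (0 : F) ∈ Set.range lehmerSlope := ⟨0, by simp [lehmerSlope]⟩
  have hcount := card_add_eq_ncard_fiber_add_mul (k := 3) hzero <| by
    rintro _ ⟨t, rfl⟩ ht
    exact ncard_lehmerSlope_fiber h ht
  rw [ncard_lehmerSlope_fiber_zero (two_ne_zero_of_not_isSquare_neg_three h)
    (three_ne_zero_of_not_isSquare_neg_three h)] at hcount
  lia

theorem lehmer_slope_count_general (h2 : (2 : F) ≠ 0) (hF : Nat.card F % 3 = 2) :
    {m : F | ∃ t : F, t ^ 3 - 9 * t ≠ 0 ∧ t ^ 2 - 1 = m * (t ^ 3 - 9 * t)}.ncard =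
      (Nat.card F - 2) / 3 := by
  have : Finite F := Nat.finite_of_card_ne_zero (by lia)
  rw [setOf_eq_range_lehmerSlope h2]
  exact ncard_range_lehmerSlope (not_isSquare_neg_three_of_card_mod_three h2 hF)

end Field

/-- For a prime `q ≥ 5` with `q ≡ 2 (mod 3)`, the affine image of Lehmer's rational
function `g(t) = (t²−1)/(t³−9t)` over `ZMod q` has exactly `(q−2)/3` elements. -/
theorem lehmer_slope_count (q : ℕ) (hq : q.Prime) (hq5 : 5 ≤ q) (hq3 : q % 3 = 2) :
    {m : ZMod q | ∃ t : ZMod q, t ^ 3 - 9 * t ≠ 0 ∧ t ^ 2 - 1 = m * (t ^ 3 - 9 * t)}.ncard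
      = (q - 2) / 3 := by
  have : Fact q.Prime := ⟨hq⟩
  have h2 : (2 : ZMod q) ≠ 0 := Ring.two_ne_zero (by rw [ZMod.ringChar_zmod_n]; lia)
  simpa using lehmer_slope_count_general h2 (by simpa using hq3)
end
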